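/- arXiv:1903.08347 — 2 statements merged into one kernel-verified Lean document; each statement's English description precedes it below -/
import Mathlib

section
/- Let B ≥ 1, let q_1, …, q_B ∈ [0,1], define p_i = q_i ∏_{k=1}^{i−1}(1 − q_k) for 1 ≤ i ≤ B and p_{B+1} = ∏_{k=1}^{B}(1 − q_k), and let X_1, …, X_N be i.i.d. random variables with values in {1, …, B+1} and P(X_n = i) = p_i. Let N_i = #{n : X_n = i}, D_i = N − ∑_{j=1}^{i−1} N_j, and define the estimator q̂_i = N_i / D_i when D_i > 0 and q̂_i = q_i when D_i = 0. Then E[q̂_i] = q_i for every 1 ≤ i ≤ B. -/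
open MeasureTheory ProbabilityTheory

/-!
Only cycles that reach bin `i` enter the estimator, so it is the mean of the indicator of `{i}` over
the samples that fall in `R = {i, i + 1, …}`. For any set `R` and function `f`, let `c` be the
conditional mean of `f` given `R`, and `D` the number of samples in `R`. The mean of `f` over the
samples in `R`, minus `c`, is `∑ n, D⁻¹ • 1_R (X n) • (f (X n) - c)`. In the `n`-th term `D` may be
replaced by `1 + D'`, where `D'` counts the samples other than `X n` in `R`. Then `(1 + D')⁻¹` is
independent of `X n`, whose factor is centred, so each term integrates to zero.
-/

section

open Finset

variable {Ω ι α E : Type*} [MeasurableSpace Ω] {μ : Measure Ω}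

section Centring

variable [MeasurableSpace α] [NormedAddCommGroup E] [IsFiniteMeasure μ] {Y : Ω → α} {R : Set α}
  {f : α → E} {c : E}

lemma integrable_indicator_sub_comp (hY : Measurable Y) (hR : MeasurableSet R)
    (hf : IntegrableOn (fun ω ↦ f (Y ω)) (Y ⁻¹' R) μ) :
    Integrable (fun ω ↦ R.indicator (f · - c) (Y ω)) μ :=
  (integrable_indicator_iff (hY hR)).2 (hf.sub (integrable_const c))

lemma integral_indicator_sub_comp_eq_zero [NormedSpace ℝ E] [CompleteSpace E] (hY : Measurable Y)
    (hR : MeasurableSet R) (hf : IntegrableOn (fun ω ↦ f (Y ω)) (Y ⁻¹' R) μ)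
    (hc : ∫ ω in Y ⁻¹' R, f (Y ω) ∂μ = μ.real (Y ⁻¹' R) • c) :
    ∫ ω, R.indicator (f · - c) (Y ω) ∂μ = 0 := by
  calc ∫ ω, R.indicator (f · - c) (Y ω) ∂μ
      = ∫ ω in Y ⁻¹' R, (f (Y ω) - c) ∂μ := integral_indicator (hY hR)
    _ = 0 := by rw [integral_sub hf (integrable_const c), setIntegral_const, hc, sub_self]

end Centring

section Counting

variable [MeasurableSpace α] {R : Set α} [DecidablePred (· ∈ R)] {X : ι → Ω → α}

lemma measurable_card_filter_mem (hX : ∀ n, Measurable (X n)) (hR : MeasurableSet R)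
    (s : Finset ι) : Measurable fun ω ↦ #{m ∈ s | X m ω ∈ R} := by
  simp only [card_filter]
  exact measurable_sum s fun m _ ↦ Measurable.ite (hX m hR) measurable_const measurable_const

lemma indepFun_card_filter_mem_of_notMem (hindep : iIndepFun X μ) (hX : ∀ n, Measurable (X n))
    (hR : MeasurableSet R) {s : Finset ι} {n : ι} (hn : n ∉ s) :
    IndepFun (fun ω ↦ #{m ∈ s | X m ω ∈ R}) (X n) μ := by
  have hcount : Measurable fun y : s → α ↦ #{m | y m ∈ R} :=
    measurable_card_filter_mem measurable_pi_apply hR univ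
  have hcount_eq : (fun ω ↦ #{m ∈ s | X m ω ∈ R}) =
      (fun y : s → α ↦ #{m | y m ∈ R}) ∘ fun ω m ↦ X m ω := by
    ext ω
    simp only [Function.comp_apply, card_filter,
      sum_coe_sort s fun m ↦ if X m ω ∈ R then 1 else 0]
  rw [hcount_eq]
  exact (hindep.indepFun_finset s {n} (disjoint_singleton_right.2 hn) hX).comp hcount
    (measurable_pi_apply ⟨n, mem_singleton_self n⟩)

end Counting

section SampleMean

variable [Fintype ι]

/-- The mean of `f` over the samples `x n` that fall in `R`; its value is `c` when there are none,
instead of the `0` given by division by zero. -/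
noncomputable def sampleMeanOn [AddCommGroup E] [Module ℝ E] (R : Set α) [DecidablePred (· ∈ R)]
    (f : α → E) (c : E) (x : ι → α) : E :=
  if 0 < #{n | x n ∈ R} then (#{n | x n ∈ R} : ℝ)⁻¹ • ∑ n with x n ∈ R, f (x n) else c

variable {R : Set α} [DecidablePred (· ∈ R)]

lemma sampleMeanOn_sub_eq_smul_sum [AddCommGroup E] [Module ℝ E] (f : α → E) (c : E) (x : ι → α) :
    sampleMeanOn R f c x - c = (#{n | x n ∈ R} : ℝ)⁻¹ • ∑ n with x n ∈ R, (f (x n) - c) := by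
  rcases Nat.eq_zero_or_pos #{n | x n ∈ R} with h | h
  · simp [sampleMeanOn, h]
  · have hne : (#{n | x n ∈ R} : ℝ) ≠ 0 := by positivity
    rw [sampleMeanOn, if_pos h, sum_sub_distrib, sum_const, smul_sub, ← Nat.cast_smul_eq_nsmul ℝ,
      inv_smul_smul₀ hne]

lemma sampleMeanOn_sub_eq_sum [DecidableEq ι] [AddCommGroup E] [Module ℝ E] (f : α → E) (c : E)
    (x : ι → α) :
    sampleMeanOn R f c x - c =
      ∑ n, (1 + #{m ∈ univ.erase n | x m ∈ R} : ℝ)⁻¹ • R.indicator (f · - c) (x n) := by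
  rw [sampleMeanOn_sub_eq_smul_sum, smul_sum, sum_filter]
  refine sum_congr rfl fun n _ ↦ ?_
  by_cases hn : x n ∈ R
  · have hcard : #{m ∈ univ.erase n | x m ∈ R} + 1 = #{m | x m ∈ R} := by
      rw [filter_erase, card_erase_add_one (by simpa using hn)]
    rw [if_pos hn, Set.indicator_of_mem hn, ← hcard, Nat.cast_succ, add_comm]
  · rw [if_neg hn, Set.indicator_of_notMem hn, smul_zero]

theorem integral_sampleMeanOn [MeasurableSpace α] [NormedAddCommGroup E] [NormedSpace ℝ E]
    [CompleteSpace E] {X : ι → Ω → α} (hindep : iIndepFun X μ) (hX : ∀ n, Measurable (X n))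
    (hR : MeasurableSet R) {f : α → E} (hfm : StronglyMeasurable f)
    (hf : ∀ n, IntegrableOn (fun ω ↦ f (X n ω)) (X n ⁻¹' R) μ) {c : E}
    (hc : ∀ n, ∫ ω in X n ⁻¹' R, f (X n ω) ∂μ = μ.real (X n ⁻¹' R) • c) :
    ∫ ω, sampleMeanOn R f c (X · ω) ∂μ = c := by
  classical
  have := hindep.isProbabilityMeasure
  let weight (k : ℕ) : ℝ := (1 + k)⁻¹
  let others (n : ι) (ω : Ω) : ℕ := #{m ∈ univ.erase n | X m ω ∈ R}
  have hind n : IndepFun (others n) (X n) μ :=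
    indepFun_card_filter_mem_of_notMem hindep hX hR (notMem_erase n univ)
  have hothers n : Measurable (others n) := measurable_card_filter_mem hX hR (univ.erase n)
  have hweight k : ‖weight k‖ ≤ 1 := by
    rw [Real.norm_of_nonneg (by positivity)]
    exact inv_le_one_of_one_le₀ (by simp)
  have hint n : Integrable (fun ω ↦ weight (others n ω) • R.indicator (f · - c) (X n ω)) μ :=
    (integrable_indicator_sub_comp (hX n) hR (hf n)).bdd_smul 1
      ((Measurable.of_discrete (f := weight)).comp (hothers n)).aestronglyMeasurable
      (.of_forall fun ω ↦ hweight (others n ω))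
  have hzero n : ∫ ω, weight (others n ω) • R.indicator (f · - c) (X n ω) ∂μ = 0 := by
    have hscore : StronglyMeasurable (R.indicator (f · - c)) :=
      (hfm.sub stronglyMeasurable_const).indicator hR
    rw [(hind n).integral_fun_comp_smul_comp (f := weight) (hothers n).aemeasurable
        (hX n).aemeasurable Measurable.of_discrete.aestronglyMeasurable hscore.aestronglyMeasurable,
      integral_indicator_sub_comp_eq_zero (hX n) hR (hf n) (hc n), smul_zero]
  have hrepr ω : sampleMeanOn R f c (X · ω) =
      (∑ n, weight (others n ω) • R.indicator (f · - c) (X n ω)) + c :=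
    sub_eq_iff_eq_add.1 (sampleMeanOn_sub_eq_sum f c (X · ω))
  simp_rw [hrepr]
  rw [integral_add (integrable_finsetSum _ fun n _ ↦ hint n) (integrable_const c),
    integral_finsetSum _ fun n _ ↦ hint n]
  simp [hzero]

end SampleMean

section FirstDetection

/-- The probability `p j` that the first detection falls in bin `j`, when bin `k` has conditional
detection probability `q k`. Bins are numbered from `0`. -/
def firstDetectionProb (q : ℕ → ℝ) (j : ℕ) : ℝ :=
  q j * ∏ k ∈ range j, (1 - q k)

lemma firstDetectionProb_nonneg {q : ℕ → ℝ} {j : ℕ} (hq : ∀ k ≤ j, q k ∈ Set.Icc 0 1) :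
    0 ≤ firstDetectionProb q j :=
  mul_nonneg (hq j le_rfl).1 <|
    prod_nonneg fun k hk ↦ sub_nonneg.2 (hq k (mem_range.1 hk).le).2

lemma sum_range_firstDetectionProb (q : ℕ → ℝ) (i : ℕ) :
    ∑ j ∈ range i, firstDetectionProb q j = 1 - ∏ k ∈ range i, (1 - q k) := by
  induction i with
  | zero => simp
  | succ i ih => rw [sum_range_succ, ih, prod_range_succ, firstDetectionProb]; ring

variable [IsProbabilityMeasure μ] {q : ℕ → ℝ} {Y : Ω → ℕ} {i : ℕ}

lemma measureReal_ge_eq_prod (hY : Measurable Y)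
    (hdist : ∀ j < i, μ.real {ω | Y ω = j} = firstDetectionProb q j) :
    μ.real {ω | i ≤ Y ω} = ∏ k ∈ range i, (1 - q k) := by
  have hlt : μ.real {ω | Y ω < i} = 1 - ∏ k ∈ range i, (1 - q k) := by
    calc μ.real {ω | Y ω < i}
        = μ.real (Y ⁻¹' range i) := by simp [Set.preimage]
      _ = ∑ j ∈ range i, μ.real (Y ⁻¹' {j}) :=
        (sum_measureReal_preimage_singleton _ fun j _ ↦ hY (measurableSet_singleton j)).symm
      _ = ∑ j ∈ range i, firstDetectionProb q j :=
        sum_congr rfl fun j hj ↦ hdist j (mem_range.1 hj)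
      _ = 1 - ∏ k ∈ range i, (1 - q k) := sum_range_firstDetectionProb q i
  have hcompl : {ω | i ≤ Y ω} = {ω | Y ω < i}ᶜ := by ext; simp
  rw [hcompl, probReal_compl_eq_one_sub (measurableSet_lt hY measurable_const), hlt, sub_sub_cancel]

lemma measureReal_eq_mul_measureReal_ge (hY : Measurable Y)
    (hdist : ∀ j ≤ i, μ.real {ω | Y ω = j} = firstDetectionProb q j) :
    μ.real {ω | Y ω = i} = q i * μ.real {ω | i ≤ Y ω} := by
  rw [hdist i le_rfl, measureReal_ge_eq_prod hY fun j hj ↦ hdist j hj.le, firstDetectionProb]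

end FirstDetection

section Coates

variable [Fintype ι]

/-- The histogram count `N_i` of bin `i`. -/
def binCount (i : ℕ) (x : ι → ℕ) : ℕ :=
  #{n | x n = i}

/-- The number `D_i` of cycles with no detection before bin `i`. The subtraction never truncates,
since the bin counts add up to at most the number of cycles. -/
def undetectedCount (i : ℕ) (x : ι → ℕ) : ℕ :=
  Fintype.card ι - ∑ j ∈ range i, binCount j x

/-- The Coates estimator `N_i / D_i` of the conditional detection probability of bin `i`, set to `q`
when `D_i = 0`. -/
noncomputable def coatesEstimator (q : ℝ) (i : ℕ) (x : ι → ℕ) : ℝ :=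
  if 0 < undetectedCount i x then (binCount i x : ℝ) / undetectedCount i x else q

lemma undetectedCount_eq_card_filter_ge (i : ℕ) (x : ι → ℕ) :
    undetectedCount i x = #{n | i ≤ x n} := by
  have hlt : ∑ j ∈ range i, binCount j x = #{n | x n < i} := by
    simpa only [binCount, mem_range] using sum_card_fiberwise_eq_card_filter univ (range i) x
  have hsplit := card_filter_add_card_filter_not (s := univ) (fun n ↦ x n < i)
  simp only [not_lt, card_univ] at hsplit
  rw [undetectedCount, hlt, ← hsplit, Nat.add_sub_cancel_left]

lemma coatesEstimator_eq_sampleMeanOn (q : ℝ) (i : ℕ) (x : ι → ℕ) :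
    coatesEstimator q i x = sampleMeanOn (Set.Ici i) (Set.indicator {i} 1) q x := by
  have hcount : ∑ n with x n ∈ Set.Ici i, Set.indicator {i} (1 : ℕ → ℝ) (x n) = binCount i x := by
    have hfilter : #{n | i ≤ x n ∧ x n = i} = #{n | x n = i} :=
      congrArg card (filter_congr fun n _ ↦ and_iff_right_of_imp Eq.ge)
    simp [Set.indicator_apply, binCount, filter_filter, hfilter]
  rw [coatesEstimator, sampleMeanOn, hcount, undetectedCount_eq_card_filter_ge, smul_eq_mul,
    div_eq_inv_mul]
  rfl

theorem coates_estimator_unbiased_general {X : ι → Ω → ℕ} (hX : ∀ n, Measurable (X n))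
    (hindep : iIndepFun X μ) {i : ℕ} {q : ℝ}
    (hq : ∀ n, μ.real {ω | X n ω = i} = q * μ.real {ω | i ≤ X n ω}) :
    ∫ ω, coatesEstimator q i (X · ω) ∂μ = q := by
  have := hindep.isProbabilityMeasure
  have hmeas n : MeasurableSet (X n ⁻¹' {i}) := hX n (measurableSet_singleton i)
  have hindicator n : (fun ω ↦ Set.indicator {i} (1 : ℕ → ℝ) (X n ω)) = (X n ⁻¹' {i}).indicator 1 :=
    rfl
  simp only [coatesEstimator_eq_sampleMeanOn]
  refine integral_sampleMeanOn hindep hX measurableSet_Ici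
    Measurable.of_discrete.stronglyMeasurable (fun n ↦ ?_) (fun n ↦ ?_)
  · rw [hindicator]
    exact ((integrable_const 1).indicator (hmeas n)).integrableOn
  · have hsub : X n ⁻¹' {i} ⊆ X n ⁻¹' Set.Ici i := Set.preimage_mono (by simp)
    rw [hindicator, integral_indicator_one (hmeas n), measureReal_restrict_apply (hmeas n),
      Set.inter_eq_left.2 hsub, smul_eq_mul, mul_comm]
    exact hq n

end Coates

end

/-- The Coates estimator `q̂ i = Nc i / Dc i` (with the
convention `q̂ i = q i` on the event `Dc i = 0`) is unbiased: `E[q̂ i] = q i`. -/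
theorem coates_estimator_unbiased
    {Ω : Type*} [MeasurableSpace Ω] (μ : Measure Ω) [IsProbabilityMeasure μ]
    (B : ℕ) (hB : 1 ≤ B) (N : ℕ)
    (q : ℕ → ℝ) (hq : ∀ i, i < B → q i ∈ Set.Icc (0 : ℝ) 1)
    (p : ℕ → ℝ)
    (hp : ∀ i, i < B → p i = q i * ∏ k ∈ Finset.range i, (1 - q k))
    (hpB : p B = ∏ k ∈ Finset.range B, (1 - q k))
    (X : Fin N → Ω → ℕ) (hXmeas : ∀ n, Measurable (X n))
    (hXrange : ∀ n ω, X n ω ≤ B)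
    (hindep : iIndepFun X μ)
    (hdist : ∀ n i, i ≤ B → μ {ω | X n ω = i} = ENNReal.ofReal (p i))
    (Nc : ℕ → Ω → ℕ)
    (hNc : ∀ i ω, Nc i ω = (Finset.univ.filter (fun n : Fin N => X n ω = i)).card)
    (Dc : ℕ → Ω → ℕ)
    (hDc : ∀ i ω, Dc i ω = N - ∑ j ∈ Finset.range i, Nc j ω)
    (qhat : ℕ → Ω → ℝ)
    (hqhat : ∀ i ω, qhat i ω =
      if 0 < Dc i ω then (Nc i ω : ℝ) / (Dc i ω : ℝ) else q i)
    (i : ℕ) (hi : i < B) :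
    ∫ ω, qhat i ω ∂μ = q i := by
  have hreal n : ∀ j ≤ i, μ.real {ω | X n ω = j} = firstDetectionProb q j := by
    intro j hj
    have hjB : j < B := by lia
    have hnonneg := firstDetectionProb_nonneg fun k (hk : k ≤ j) ↦ hq k (by lia)
    rw [measureReal_def, hdist n j hjB.le, hp j hjB]
    exact ENNReal.toReal_ofReal hnonneg
  have hcoates ω : qhat i ω = coatesEstimator (q i) i (X · ω) := by
    simp only [hqhat, hDc, hNc, coatesEstimator, undetectedCount, binCount, Fintype.card_fin]
  simpa only [hcoates] using coates_estimator_unbiased_general hXmeas hindep fun n ↦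
    measureReal_eq_mul_measureReal_ge (hXmeas n) (hreal n)
end

section
/- Let B ≥ 1, let q_1, …, q_B ∈ [0,1], define p_i = q_i ∏_{k=1}^{i−1}(1 − q_k) for 1 ≤ i ≤ B and p_{B+1} = ∏_{k=1}^{B}(1 − q_k), and let X_1, …, X_N be i.i.d. random variables with values in {1, …, B+1} and P(X_n = i) = p_i. Let N_i = #{n : X_n = i}, D_i = N − ∑_{j=1}^{i−1} N_j, and define q̂_i = N_i / D_i when D_i > 0 and q̂_i = q_i when D_i = 0. Then for every i, E[(q̂_i − q_i)^2] = q_i (1 − q_i) · E[ 1_{D_i > 0} / D_i ]. -/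
open MeasureTheory ProbabilityTheory

/-!
Write `E` for "detected in bin `i`" and `A` for "not detected before bin `i`", and let `K` and `D`
count the cycles in `E` and in `A`. With the scores `zₙ = 1_E(Xₙ) - r 1_A(Xₙ)`, where `r = q i`,
one has `K - r D = ∑ₙ zₙ`. Each score is centred and vanishes when cycle `n` is not in `A`, while
on `A` the count `D` is one plus the count of the other cycles, which is independent of `Xₙ`. So
`zₙ` is orthogonal to `φ(D)` and to `zₘ φ(D)` for `m ≠ n`, and since
`zₙ² = (1 - 2r) zₙ + r (1 - r) 1_A(Xₙ)`, it follows that `E[(K - r D)² φ(D)] = r (1 - r) E[D φ(D)]`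
for every weight `φ`. The variance formula is the case `φ(d) = 1 / d²`, `φ(0) = 0`.
-/

section HitCount

variable {ι α : Type*} [Fintype ι]

/-- The number of coordinates of `x` lying in `A`: for `x` the list of outcomes of all cycles, a
histogram count or a number of cycles still at risk. As a sum of indicators it needs no decidability
of membership in `A`. -/
noncomputable def hitCount (A : Set α) (x : ι → α) : ℕ :=
  ∑ n, A.indicator 1 (x n)

lemma hitCount_eq_card (A : Set α) [DecidablePred (· ∈ A)] (x : ι → α) :
    hitCount A x = (Finset.univ.filter fun n => x n ∈ A).card := by
  simp only [hitCount, Set.indicator_apply, Pi.one_apply, Finset.card_filter]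

lemma cast_hitCount (A : Set α) (x : ι → α) :
    (hitCount A x : ℝ) = ∑ n, A.indicator 1 (x n) := by
  classical
  simp [hitCount, Set.indicator_apply]

lemma hitCount_le_card (A : Set α) (x : ι → α) : hitCount A x ≤ Fintype.card ι := by
  classical
  rw [hitCount_eq_card]
  exact Finset.card_le_univ _

lemma hitCount_update [DecidableEq ι] {A : Set α} {x : ι → α} {m : ι} {a : α}
    (h : a ∈ A ↔ x m ∈ A) : hitCount A (Function.update x m a) = hitCount A x := by
  classical
  refine Finset.sum_congr rfl fun n _ => ?_
  obtain rfl | hn := eq_or_ne n m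
  · simp [Set.indicator_apply, h]
  · rw [Function.update_of_ne hn]

lemma measurable_hitCount [MeasurableSpace α] {A : Set α} (hA : MeasurableSet A) :
    Measurable (hitCount A : (ι → α) → ℕ) :=
  Finset.measurable_fun_sum _ fun n _ => (measurable_one.indicator hA).comp (measurable_pi_apply n)

lemma sum_hitCount_singleton_add_hitCount_Ici (i : ℕ) (x : ι → ℕ) :
    ∑ j ∈ Finset.range i, hitCount {j} x + hitCount (Set.Ici i) x = Fintype.card ι := by
  have hone (n : ι) : ∑ j ∈ Finset.range i, Set.indicator {j} 1 (x n)
      + (Set.Ici i).indicator 1 (x n) = 1 := by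
    rcases lt_or_ge (x n) i with h | h <;> simp [h, not_le_of_gt, not_lt_of_ge]
  simp only [hitCount]
  rw [Finset.sum_comm, ← Finset.sum_add_distrib, Finset.sum_congr rfl fun n _ => hone n]
  simp

end HitCount

section Score

variable {α : Type*} {E A : Set α} {r : ℝ}

/-- The score `1_E - r 1_A` of one observation: for `E ⊆ A` it is centred when `r` is the
conditional probability of `E` given `A`. -/
noncomputable def score (E A : Set α) (r : ℝ) (a : α) : ℝ :=
  E.indicator 1 a - r * A.indicator 1 a

lemma score_of_notMem (hEA : E ⊆ A) {a : α} (ha : a ∉ A) : score E A r a = 0 := by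
  simp [score, ha, Set.notMem_subset hEA ha]

lemma score_sq (hEA : E ⊆ A) (a : α) :
    score E A r a ^ 2 = (1 - 2 * r) * score E A r a + r * (1 - r) * A.indicator 1 a := by
  by_cases hA : a ∈ A
  · by_cases hE : a ∈ E <;> simp only [score, hA, hE, Set.indicator_of_mem,
      Set.indicator_of_notMem, not_false_eq_true, Pi.one_apply] <;> ring
  · simp [score_of_notMem hEA hA, hA]

lemma sum_score {ι : Type*} [Fintype ι] (x : ι → α) :
    ∑ n, score E A r (x n) = hitCount E x - r * hitCount A x := by
  simp only [score, cast_hitCount, Finset.sum_sub_distrib, Finset.mul_sum]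

lemma measurable_score [MeasurableSpace α] (hE : MeasurableSet E) (hA : MeasurableSet A) :
    Measurable (score E A r) :=
  (measurable_one.indicator hE).sub ((measurable_one.indicator hA).const_mul r)

end Score

section Integrability

variable {Ω α : Type*} [MeasurableSpace Ω] [MeasurableSpace α] {μ : Measure Ω} {Y : Ω → α}
  {E A : Set α} {g : Ω → ℝ}

lemma integrable_indicator_one_mul (hY : Measurable Y) (hA : MeasurableSet A)
    (hg : Integrable g μ) : Integrable (fun ω => A.indicator 1 (Y ω) * g ω) μ :=
  hg.bdd_mul (c := 1) ((measurable_one.indicator hA).comp hY).aestronglyMeasurable <|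
    .of_forall fun ω => by simpa using norm_indicator_le_norm_self (s := A) (1 : α → ℝ) (Y ω)

lemma integrable_score_mul (hY : Measurable Y) (hE : MeasurableSet E) (hA : MeasurableSet A)
    (r : ℝ) (hg : Integrable g μ) : Integrable (fun ω => score E A r (Y ω) * g ω) μ := by
  simp only [score, sub_mul, mul_assoc]
  exact (integrable_indicator_one_mul hY hE hg).sub
    ((integrable_indicator_one_mul hY hA hg).const_mul r)

lemma integrable_comp_hitCount [IsFiniteMeasure μ] {ι : Type*} [Fintype ι] {X : ι → Ω → α}
    (hX : ∀ n, Measurable (X n)) (hA : MeasurableSet A) (φ : ℕ → ℝ) :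
    Integrable (fun ω => φ (hitCount A fun n => X n ω)) μ := by
  have hmeas : Measurable fun ω => φ (hitCount A fun n => X n ω) :=
    Measurable.of_discrete.comp ((measurable_hitCount hA).comp (measurable_pi_lambda _ hX))
  refine Integrable.of_bound hmeas.aestronglyMeasurable
    (∑ d ∈ Finset.range (Fintype.card ι + 1), ‖φ d‖) (.of_forall fun ω => ?_)
  exact Finset.single_le_sum (f := fun d => ‖φ d‖) (fun d _ => norm_nonneg _)
    (Finset.mem_range_succ_iff.mpr (hitCount_le_card A _))

lemma integral_score [IsFiniteMeasure μ] (hY : Measurable Y) (hE : MeasurableSet E)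
    (hA : MeasurableSet A) (r : ℝ) :
    ∫ ω, score E A r (Y ω) ∂μ = μ.real (Y ⁻¹' E) - r * μ.real (Y ⁻¹' A) := by
  have hind {S : Set α} (hS : MeasurableSet S) :
      Integrable (fun ω => S.indicator (1 : α → ℝ) (Y ω)) μ := by
    simpa using integrable_indicator_one_mul hY hS (integrable_const (1 : ℝ))
  have hint {S : Set α} (hS : MeasurableSet S) :
      ∫ ω, S.indicator (1 : α → ℝ) (Y ω) ∂μ = μ.real (Y ⁻¹' S) :=
    integral_indicator_one (hY hS)
  simp only [score]
  rw [integral_sub (hind hE) ((hind hA).const_mul r), integral_const_mul, hint hE, hint hA]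

end Integrability

section Independence

variable {Ω α ι : Type*} [MeasurableSpace Ω] [MeasurableSpace α]
  {μ : Measure Ω} {X : ι → Ω → α} {E A : Set α} {r : ℝ}

lemma indepFun_update [DecidableEq ι] (hX : ∀ n, Measurable (X n)) (hindep : iIndepFun X μ)
    (m : ι) (a : α) : IndepFun (X m) (fun ω => Function.update (fun n => X n ω) m a) μ := by
  have hsup : Indep (⨆ n ∈ ({m} : Set ι), MeasurableSpace.comap (X n) inferInstance)
      (⨆ n ∈ ({m} : Set ι)ᶜ, MeasurableSpace.comap (X n) inferInstance) μ :=
    indep_iSup_of_disjoint (fun n => (hX n).comap_le) hindep disjoint_compl_right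
  have hupdate : Measurable[⨆ n ∈ ({m} : Set ι)ᶜ, MeasurableSpace.comap (X n) inferInstance]
      fun ω => Function.update (fun n => X n ω) m a := by
    refine @measurable_pi_lambda _ _ _ (_) _ _ fun n => ?_
    obtain rfl | hn := eq_or_ne n m
    · simp
    · simp only [Function.update_of_ne hn]
      exact measurable_iff_comap_le.mpr (le_iSup₂_of_le n hn le_rfl)
  exact indep_of_indep_of_le_right (indep_of_indep_of_le_left hsup (by simp)) hupdate.comap_le

lemma integral_mul_eq_zero_of_update [DecidableEq ι] (hX : ∀ n, Measurable (X n))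
    (hindep : iIndepFun X μ) {m : ι} {z : α → ℝ} (hz : Measurable z) (hzA : ∀ a ∉ A, z a = 0)
    (hmean : ∫ ω, z (X m ω) ∂μ = 0) {F : (ι → α) → ℝ} (hF : Measurable F)
    (hFA : ∀ x, ∀ a ∈ A, x m ∈ A → F (Function.update x m a) = F x) :
    ∫ ω, z (X m ω) * F (fun n => X n ω) ∂μ = 0 := by
  obtain rfl | ⟨a, ha⟩ := A.eq_empty_or_nonempty
  · simp [hzA]
  have hfreeze (ω : Ω) : z (X m ω) * F (fun n => X n ω)
      = z (X m ω) * F (Function.update (fun n => X n ω) m a) := by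
    by_cases hω : X m ω ∈ A
    · rw [hFA _ a ha hω]
    · simp [hzA _ hω]
  have hind := (indepFun_update hX hindep m a).comp hz hF
  have hupdate : Measurable fun ω => Function.update (fun n => X n ω) m a :=
    measurable_update_left.comp (measurable_pi_lambda _ hX)
  calc ∫ ω, z (X m ω) * F (fun n => X n ω) ∂μ
      = ∫ ω, z (X m ω) * F (Function.update (fun n => X n ω) m a) ∂μ := by simp only [hfreeze]
    _ = (∫ ω, z (X m ω) ∂μ) * ∫ ω, F (Function.update (fun n => X n ω) m a) ∂μ :=
        hind.integral_fun_mul_eq_mul_integral (hz.comp (hX m)).aestronglyMeasurable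
          (hF.comp hupdate).aestronglyMeasurable
    _ = 0 := by rw [hmean, zero_mul]

lemma integral_score_mul_eq_zero_of_update [DecidableEq ι] (hX : ∀ n, Measurable (X n))
    (hindep : iIndepFun X μ) (hE : MeasurableSet E) (hA : MeasurableSet A) (hEA : E ⊆ A) {m : ι}
    (hr : μ.real (X m ⁻¹' E) = r * μ.real (X m ⁻¹' A)) {F : (ι → α) → ℝ} (hF : Measurable F)
    (hFA : ∀ x, ∀ a ∈ A, x m ∈ A → F (Function.update x m a) = F x) :
    ∫ ω, score E A r (X m ω) * F (fun n => X n ω) ∂μ = 0 := by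
  have := hindep.isProbabilityMeasure
  refine integral_mul_eq_zero_of_update hX hindep (measurable_score hE hA)
    (fun a => score_of_notMem hEA) ?_ hF hFA
  rw [integral_score (hX m) hE hA, hr, sub_self]

variable [Fintype ι]

lemma integral_score_mul_score_mul_of_ne (hX : ∀ n, Measurable (X n)) (hindep : iIndepFun X μ)
    (hE : MeasurableSet E) (hA : MeasurableSet A) (hEA : E ⊆ A) {m n : ι} (hmn : m ≠ n)
    (hr : μ.real (X m ⁻¹' E) = r * μ.real (X m ⁻¹' A)) (φ : ℕ → ℝ) :
    ∫ ω, score E A r (X m ω) * (score E A r (X n ω) * φ (hitCount A fun k => X k ω)) ∂μ = 0 := by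
  classical
  refine integral_score_mul_eq_zero_of_update hX hindep hE hA hEA hr
    (F := fun x => score E A r (x n) * φ (hitCount A x))
    (((measurable_score hE hA).comp (measurable_pi_apply n)).mul
      (Measurable.of_discrete.comp (measurable_hitCount hA))) fun x a ha hx => ?_
  rw [Function.update_of_ne hmn.symm, hitCount_update (by simp only [ha, hx])]

lemma integral_score_mul_score_mul_self (hX : ∀ n, Measurable (X n)) (hindep : iIndepFun X μ)
    (hE : MeasurableSet E) (hA : MeasurableSet A) (hEA : E ⊆ A) {m : ι}
    (hr : μ.real (X m ⁻¹' E) = r * μ.real (X m ⁻¹' A)) (φ : ℕ → ℝ) :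
    ∫ ω, score E A r (X m ω) * (score E A r (X m ω) * φ (hitCount A fun k => X k ω)) ∂μ
      = r * (1 - r) * ∫ ω, A.indicator 1 (X m ω) * φ (hitCount A fun k => X k ω) ∂μ := by
  classical
  have := hindep.isProbabilityMeasure
  have hφ := integrable_comp_hitCount (μ := μ) hX hA φ
  have horth : ∫ ω, score E A r (X m ω) * φ (hitCount A fun k => X k ω) ∂μ = 0 :=
    integral_score_mul_eq_zero_of_update hX hindep hE hA hEA hr
      (F := fun x => φ (hitCount A x)) (Measurable.of_discrete.comp (measurable_hitCount hA))
      fun x a ha hx => by rw [hitCount_update (by simp only [ha, hx])]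
  simp only [← mul_assoc, ← sq, score_sq hEA, add_mul]
  simp only [mul_assoc _ (score _ _ _ _), mul_assoc _ (A.indicator _ _)]
  rw [integral_add ((integrable_score_mul (hX m) hE hA r hφ).const_mul _)
      ((integrable_indicator_one_mul (hX m) hA hφ).const_mul _),
    integral_const_mul, integral_const_mul, horth, mul_zero, zero_add]

theorem integral_sq_hitCount_sub_mul (hX : ∀ n, Measurable (X n)) (hindep : iIndepFun X μ)
    (hE : MeasurableSet E) (hA : MeasurableSet A) (hEA : E ⊆ A)
    (hr : ∀ n, μ.real (X n ⁻¹' E) = r * μ.real (X n ⁻¹' A)) (φ : ℕ → ℝ) :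
    ∫ ω, ((hitCount E fun n => X n ω : ℝ) - r * hitCount A fun n => X n ω) ^ 2
        * φ (hitCount A fun n => X n ω) ∂μ
      = r * (1 - r)
        * ∫ ω, (hitCount A fun n => X n ω : ℝ) * φ (hitCount A fun n => X n ω) ∂μ := by
  have := hindep.isProbabilityMeasure
  let D (ω : Ω) : ℕ := hitCount A fun n => X n ω
  let z (n : ι) (ω : Ω) : ℝ := score E A r (X n ω)
  have hφ : Integrable (fun ω => φ (D ω)) μ := integrable_comp_hitCount hX hA φ
  have hzz (m n : ι) : Integrable (fun ω => z m ω * (z n ω * φ (D ω))) μ :=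
    integrable_score_mul (hX m) hE hA r (integrable_score_mul (hX n) hE hA r hφ)
  calc _ = ∫ ω, ∑ m, ∑ n, z m ω * (z n ω * φ (D ω)) ∂μ := by
        simp only [← sum_score, sq, Finset.sum_mul_sum, Finset.sum_mul _ _ (φ _), mul_assoc, z, D]
    _ = ∑ m, ∑ n, ∫ ω, z m ω * (z n ω * φ (D ω)) ∂μ := by
        rw [integral_finsetSum _ fun m _ => integrable_finsetSum _ fun n _ => hzz m n]
        simp only [integral_finsetSum _ fun n _ => hzz _ n]
    _ = ∑ m, ∫ ω, z m ω * (z m ω * φ (D ω)) ∂μ :=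
        Finset.sum_congr rfl fun m _ => Finset.sum_eq_single m
          (fun n _ hnm =>
            integral_score_mul_score_mul_of_ne hX hindep hE hA hEA hnm.symm (hr m) φ)
          (by simp)
    _ = ∑ m, r * (1 - r) * ∫ ω, A.indicator 1 (X m ω) * φ (D ω) ∂μ :=
        Finset.sum_congr rfl fun m _ =>
          integral_score_mul_score_mul_self hX hindep hE hA hEA (hr m) φ
    _ = _ := by
        rw [← Finset.mul_sum,
          ← integral_finsetSum _ fun m _ => integrable_indicator_one_mul (hX m) hA hφ]
        simp only [← Finset.sum_mul, ← cast_hitCount, D]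

theorem coates_estimator_variance_general (hX : ∀ n, Measurable (X n)) (hindep : iIndepFun X μ)
    (hE : MeasurableSet E) (hA : MeasurableSet A) (hEA : E ⊆ A)
    (hr : ∀ n, μ.real (X n ⁻¹' E) = r * μ.real (X n ⁻¹' A)) :
    ∫ ω, ((if 0 < hitCount A fun n => X n ω
        then (hitCount E fun n => X n ω : ℝ) / hitCount A fun n => X n ω else r) - r) ^ 2 ∂μ
      = r * (1 - r) * ∫ ω, (if 0 < hitCount A fun n => X n ω
        then (hitCount A fun n => X n ω : ℝ)⁻¹ else 0) ∂μ := by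
  have hsq (K : ℝ) (d : ℕ) : ((if 0 < d then K / d else r) - r) ^ 2
      = (K - r * d) ^ 2 * ((d : ℝ) ^ 2)⁻¹ := by
    obtain rfl | hd := d.eq_zero_or_pos
    · simp
    · rw [if_pos hd]
      field_simp
  have hinv (d : ℕ) : (if 0 < d then (d : ℝ)⁻¹ else 0) = d * ((d : ℝ) ^ 2)⁻¹ := by
    obtain rfl | hd := d.eq_zero_or_pos
    · simp
    · rw [if_pos hd]
      field_simp
  simp only [hsq, hinv]
  exact integral_sq_hitCount_sub_mul hX hindep hE hA hEA hr fun d => ((d : ℝ) ^ 2)⁻¹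

end Independence

section FirstDetection

variable {Ω : Type*} [MeasurableSpace Ω] {μ : Measure Ω} [IsProbabilityMeasure μ] {Y : Ω → ℕ}
  {q : ℕ → ℝ} {i : ℕ}

lemma measureReal_preimage_Ici_eq_prod (hY : Measurable Y)
    (hfirst : ∀ j < i, μ.real (Y ⁻¹' {j}) = q j * ∏ k ∈ Finset.range j, (1 - q k)) :
    μ.real (Y ⁻¹' Set.Ici i) = ∏ k ∈ Finset.range i, (1 - q k) := by
  induction i with
  | zero => simp
  | succ i ih =>
    have hdiff : Y ⁻¹' Set.Ici (i + 1) = Y ⁻¹' Set.Ici i \ Y ⁻¹' {i} := by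
      ext ω
      simp only [Set.mem_preimage, Set.mem_Ici, Set.mem_sdiff, Set.mem_singleton_iff]
      omega
    have hsub : Y ⁻¹' {i} ⊆ Y ⁻¹' Set.Ici i :=
      Set.preimage_mono (Set.singleton_subset_iff.mpr Set.self_mem_Ici)
    rw [hdiff, measureReal_sdiff hsub (hY (measurableSet_singleton i)), hfirst i i.lt_succ_self,
      ih fun j hj => hfirst j (hj.trans i.lt_succ_self), Finset.prod_range_succ]
    ring

lemma measureReal_preimage_singleton_eq_mul (hY : Measurable Y)
    (hq : ∀ j ≤ i, q j ∈ Set.Icc (0 : ℝ) 1)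
    (hfirst : ∀ j ≤ i, μ (Y ⁻¹' {j}) = .ofReal (q j * ∏ k ∈ Finset.range j, (1 - q k))) :
    μ.real (Y ⁻¹' {i}) = q i * μ.real (Y ⁻¹' Set.Ici i) := by
  have hreal (j : ℕ) (hj : j ≤ i) :
      μ.real (Y ⁻¹' {j}) = q j * ∏ k ∈ Finset.range j, (1 - q k) := by
    rw [measureReal_def, hfirst j hj, ENNReal.toReal_ofReal]
    refine mul_nonneg (hq j hj).1 (Finset.prod_nonneg fun k hk => sub_nonneg.mpr ?_)
    exact (hq k ((Finset.mem_range.mp hk).le.trans hj)).2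
  rw [hreal i le_rfl, measureReal_preimage_Ici_eq_prod hY fun j hj => hreal j hj.le]

end FirstDetection

/-- Variance of the Coates estimator:
`E[(q̂ i − q i)²] = q i (1 − q i) · E[1_{Dc i > 0} / Dc i]`. -/
theorem coates_estimator_variance
    {Ω : Type*} [MeasurableSpace Ω] (μ : Measure Ω) [IsProbabilityMeasure μ]
    (B : ℕ) (hB : 1 ≤ B) (N : ℕ)
    (q : ℕ → ℝ) (hq : ∀ i, i < B → q i ∈ Set.Icc (0 : ℝ) 1)
    (p : ℕ → ℝ)
    (hp : ∀ i, i < B → p i = q i * ∏ k ∈ Finset.range i, (1 - q k))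
    (hpB : p B = ∏ k ∈ Finset.range B, (1 - q k))
    (X : Fin N → Ω → ℕ) (hXmeas : ∀ n, Measurable (X n))
    (hXrange : ∀ n ω, X n ω ≤ B)
    (hindep : iIndepFun X μ)
    (hdist : ∀ n i, i ≤ B → μ {ω | X n ω = i} = ENNReal.ofReal (p i))
    (Nc : ℕ → Ω → ℕ)
    (hNc : ∀ i ω, Nc i ω = (Finset.univ.filter (fun n : Fin N => X n ω = i)).card)
    (Dc : ℕ → Ω → ℕ)
    (hDc : ∀ i ω, Dc i ω = N - ∑ j ∈ Finset.range i, Nc j ω)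
    (qhat : ℕ → Ω → ℝ)
    (hqhat : ∀ i ω, qhat i ω =
      if 0 < Dc i ω then (Nc i ω : ℝ) / (Dc i ω : ℝ) else q i)
    (i : ℕ) (hi : i < B) :
    ∫ ω, (qhat i ω - q i) ^ 2 ∂μ =
      q i * (1 - q i) * ∫ ω, (if 0 < Dc i ω then ((Dc i ω : ℝ))⁻¹ else 0) ∂μ := by
  have hN (ω : Ω) : Nc i ω = hitCount {i} fun n => X n ω := by
    simp only [hNc, hitCount_eq_card, Set.mem_singleton_iff]
  have hD (ω : Ω) : Dc i ω = hitCount (Set.Ici i) fun n => X n ω := by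
    have hpartition := sum_hitCount_singleton_add_hitCount_Ici i fun n => X n ω
    simp only [hitCount_eq_card {_}, Set.mem_singleton_iff, Fintype.card_fin] at hpartition
    simp only [hDc, hNc]
    omega
  have hhazard (n : Fin N) : μ.real (X n ⁻¹' {i}) = q i * μ.real (X n ⁻¹' Set.Ici i) :=
    measureReal_preimage_singleton_eq_mul (hXmeas n) (fun j hj => hq j (hj.trans_lt hi))
      fun j hj => (hdist n j (hj.trans hi.le)).trans (by rw [hp j (hj.trans_lt hi)])
  simp only [hqhat, hN, hD]
  exact coates_estimator_variance_general hXmeas hindep (measurableSet_singleton i)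
    measurableSet_Ici (Set.singleton_subset_iff.mpr Set.self_mem_Ici) hhazard
end
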